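/- arXiv:1704.08830 — 2 statements merged into one kernel-verified Lean document; each statement's English description precedes it below -/
import Mathlib

section
/- Let D = (V, A) be a digraph whose arc set A is countable. If D is balanced, then A can be partitioned into dicycles. -/
/-!
Every arc `(u, v)` of a balanced digraph lies on a dicycle: the set `X` of vertices reachable from
`v` has no outgoing arc, hence no incoming arc, so `u ∈ X` and a shortest path from `v` to `u`
closes up with `(u, v)` to a dicycle (`exists_dicycle`). A dicycle is finite and is itself balanced
(`IsDicycle.enatBalanced`), so deleting it from a balanced digraph leaves a balanced digraph: finite
cuts lose the same finite number on both sides, and infinite cuts stay infinite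
(`ENatBalanced.diff`). Now enumerate the arcs and, at step `n`, delete a dicycle through
the `n`-th arc if that arc is still present. The deleted dicycles are pairwise disjoint
and cover all arcs.
-/

/-- The set of arcs of `A` going out of the vertex set `X`. -/
def outArcs {V : Type*} (A : Set (V × V)) (X : Set V) : Set (V × V) :=
  {e ∈ A | e.1 ∈ X ∧ e.2 ∉ X}

/-- The set of arcs of `A` going into the vertex set `X`. -/
def inArcs {V : Type*} (A : Set (V × V)) (X : Set V) : Set (V × V) :=
  {e ∈ A | e.1 ∉ X ∧ e.2 ∈ X}

/-- A digraph (given by its arc set `A`) is balanced if for each vertex set the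
cardinalities of the ingoing and the outgoing arcs coincide. -/
def IsBalanced {V : Type*} (A : Set (V × V)) : Prop :=
  ∀ X : Set V, Cardinal.mk (inArcs A X) = Cardinal.mk (outArcs A X)

/-- `C` is (the arc set of) a directed cycle of the digraph with arc set `A`. -/
def IsDicycle {V : Type*} (A : Set (V × V)) (C : Set (V × V)) : Prop :=
  ∃ (n : ℕ) (f : ZMod n → V), 2 ≤ n ∧ Function.Injective f ∧
    C = {p | ∃ i : ZMod n, p = (f i, f (i + 1))} ∧ C ⊆ A

/-- `P` is a partition of the arc set `A` into dicycles. -/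
def IsDicyclePartition {V : Type*} (A : Set (V × V)) (P : Set (Set (V × V))) : Prop :=
  (∀ C ∈ P, IsDicycle A C) ∧ P.PairwiseDisjoint id ∧ ⋃₀ P = A

/-- Balancedness measured with `Set.encard`. It is implied by `IsBalanced`, and for countable arc
sets it is equivalent to it; values in `ℕ∞` make cancellation of finite cuts convenient. -/
def ENatBalanced {V : Type*} (A : Set (V × V)) : Prop :=
  ∀ X : Set V, (inArcs A X).encard = (outArcs A X).encard

lemma IsBalanced.enatBalanced {V : Type*} {A : Set (V × V)} (h : IsBalanced A) :
    ENatBalanced A := fun X => congrArg Cardinal.toENat (h X)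

lemma reflTransGen_exists_path {V : Type*} {r : V → V → Prop} {v u : V}
    (h : Relation.ReflTransGen r v u) :
    ∃ (m : ℕ) (g : ℕ → V), g 0 = v ∧ g m = u ∧ ∀ i < m, r (g i) (g (i + 1)) := by
  induction h with
  | refl => exact ⟨0, fun _ => v, rfl, rfl, by simp⟩
  | @tail b c _ hbc ih =>
    obtain ⟨m, g, h0, hm, hg⟩ := ih
    refine ⟨m + 1, fun k => if k ≤ m then g k else c, by simp [h0], by simp, ?_⟩
    intro i hi
    rcases Nat.lt_or_ge i m with h | h
    · have h1 : i ≤ m := h.le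
      have h2 : i + 1 ≤ m := h
      simpa [h1, h2] using hg i h
    · obtain rfl : i = m := by omega
      simpa [hm] using hbc

/-- A shortest path is injective: a repeated vertex would allow cutting out a segment. -/
lemma reflTransGen_exists_injOn_path {V : Type*} {r : V → V → Prop} {v u : V}
    (h : Relation.ReflTransGen r v u) :
    ∃ (m : ℕ) (g : ℕ → V), g 0 = v ∧ g m = u ∧ (∀ i < m, r (g i) (g (i + 1))) ∧
      ∀ i j, i ≤ m → j ≤ m → g i = g j → i = j := by
  classical
  have hex := reflTransGen_exists_path h
  obtain ⟨g, h0, hm, hg⟩ := Nat.find_spec hex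
  have hmin := fun k => Nat.find_min (H := hex) (m := k)
  set m := Nat.find hex
  have key : ∀ i j, i < j → j ≤ m → g i ≠ g j := by
    intro i j hij hj heq
    refine hmin (m - (j - i)) (by omega)
      ⟨fun k => if k ≤ i then g k else g (k + (j - i)), by simp [h0], ?_, ?_⟩
    · rcases Nat.lt_or_ge i (m - (j - i)) with h | h
      · have h1 : ¬ (m - (j - i) ≤ i) := by omega
        have h2 : m - (j - i) + (j - i) = m := by omega
        simp only [h1, if_false, h2, hm]
      · have h1 : m - (j - i) = i := by omega
        have h2 : j = m := by omega
        simp only [h1, le_refl, if_true]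
        rw [heq, h2, hm]
    · intro k hk
      rcases lt_trichotomy k i with h | h | h
      · have h1 : k ≤ i := h.le
        have h2 : k + 1 ≤ i := h
        simp only [h1, h2, if_true]
        exact hg k (by omega)
      · subst h
        have h3 : k + 1 + (j - k) = j + 1 := by omega
        simp only [le_refl, if_true, Nat.not_succ_le_self, if_false, h3, heq]
        exact hg j (by omega)
      · have h1 : ¬ k ≤ i := by omega
        have h2 : ¬ k + 1 ≤ i := by omega
        have h3 : k + 1 + (j - i) = k + (j - i) + 1 := by omega
        simp only [h1, h2, if_false, h3]
        exact hg _ (by omega)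
  refine ⟨m, g, h0, hm, hg, fun i j hi hj heq => ?_⟩
  rcases lt_trichotomy i j with h | h | h
  · exact absurd heq (key i j h hj)
  · exact h
  · exact absurd heq.symm (key j i h hi)

lemma zmod_val_add_one {m : ℕ} (i : ZMod (m + 1)) :
    (i + 1).val = if i.val = m then 0 else i.val + 1 := by
  -- `ZMod (m + 1)` unfolds to `Fin (m + 1)`.
  have key : ∀ j : Fin (m + 1), (j + 1).val = if j.val = m then 0 else j.val + 1 := by
    intro j
    rw [Fin.val_add_one]
    simp [Fin.ext_iff]
  exact key i

/-- Every arc of a balanced loop-free digraph lies on a dicycle. -/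
lemma exists_dicycle {V : Type*} {A : Set (V × V)} (hA : ∀ e ∈ A, e.1 ≠ e.2)
    (hb : ENatBalanced A) {a : V × V} (ha : a ∈ A) : ∃ C, IsDicycle A C ∧ a ∈ C := by
  obtain ⟨u, v⟩ := a
  have hreach : Relation.ReflTransGen (fun x y => (x, y) ∈ A) v u := by
    by_contra hu
    let X : Set V := {x | Relation.ReflTransGen (fun x y => (x, y) ∈ A) v x}
    have hout : outArcs A X = ∅ := by
      ext ⟨x, y⟩
      simp only [outArcs, Set.mem_ofPred_eq, Set.mem_empty_iff_false, iff_false, not_and, not_not]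
      exact fun hxy hx => Relation.ReflTransGen.tail hx hxy
    have hin : inArcs A X = ∅ := by
      rw [← Set.encard_eq_zero, hb X, hout, Set.encard_empty]
    have : (u, v) ∈ inArcs A X := ⟨ha, hu, Relation.ReflTransGen.refl⟩
    simp [hin] at this
  obtain ⟨m, g, h0, hm, hg, hinj⟩ := reflTransGen_exists_injOn_path hreach
  have hm0 : m ≠ 0 := by
    rintro rfl
    exact hA _ ha (hm.symm.trans h0)
  let f : ZMod (m + 1) → V := fun i => g i.val
  have hlast : ∀ i : ZMod (m + 1), i.val = m → (f i, f (i + 1)) = (u, v) := by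
    intro i hi
    have h1 : (i + 1).val = 0 := by
      exact (zmod_val_add_one i).trans (if_pos hi)
    simp only [f, hi, h1, hm, h0]
  refine ⟨{p | ∃ i : ZMod (m + 1), p = (f i, f (i + 1))},
    ⟨m + 1, f, by omega, ?_, rfl, ?_⟩, (Fin.last m : Fin (m + 1)), (hlast _ rfl).symm⟩
  · intro i j hij
    exact Fin.ext (hinj _ _ (Nat.le_of_lt_succ (Fin.is_lt i)) (Nat.le_of_lt_succ (Fin.is_lt j)) hij)
  · rintro _ ⟨i, rfl⟩
    by_cases hi : i.val = m
    · rw [hlast i hi]; exact ha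
    · have h1 : (i + 1).val = i.val + 1 := by
        exact (zmod_val_add_one i).trans (if_neg hi)
      have h2 : i.val < m + 1 := Fin.is_lt i
      simp only [f, h1]
      exact hg _ (by omega)

lemma IsDicycle.finite {V : Type*} {A C : Set (V × V)} (h : IsDicycle A C) : C.Finite := by
  obtain ⟨n, f, hn, -, rfl, -⟩ := h
  have : NeZero n := ⟨by omega⟩
  refine (Set.finite_range fun i : ZMod n => (f i, f (i + 1))).subset ?_
  rintro _ ⟨i, rfl⟩
  exact ⟨i, rfl⟩

/-- A dicycle enters every vertex set as often as it leaves it: both the tails and the heads of its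
arcs run through each vertex of the cycle once. -/
lemma IsDicycle.enatBalanced {V : Type*} {A C : Set (V × V)} (h : IsDicycle A C) :
    ENatBalanced C := by
  intro X
  obtain ⟨n, f, hn, hf, rfl, -⟩ := h
  have : NeZero n := ⟨by omega⟩
  have hF : Function.Injective fun i : ZMod n => (f i, f (i + 1)) :=
    fun i j hij => hf (Prod.ext_iff.1 hij).1
  have e1 : inArcs {p | ∃ i : ZMod n, p = (f i, f (i + 1))} X
      = (fun i : ZMod n => (f i, f (i + 1))) '' {i | f i ∉ X ∧ f (i + 1) ∈ X} := by
    ext p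
    constructor
    · rintro ⟨⟨i, rfl⟩, h⟩
      exact ⟨i, h, rfl⟩
    · rintro ⟨i, h, rfl⟩
      exact ⟨⟨i, rfl⟩, h⟩
  have e2 : outArcs {p | ∃ i : ZMod n, p = (f i, f (i + 1))} X
      = (fun i : ZMod n => (f i, f (i + 1))) '' {i | f i ∈ X ∧ f (i + 1) ∉ X} := by
    ext p
    constructor
    · rintro ⟨⟨i, rfl⟩, h⟩
      exact ⟨i, h, rfl⟩
    · rintro ⟨i, h, rfl⟩
      exact ⟨⟨i, rfl⟩, h⟩
  rw [e1, e2, hF.encard_image, hF.encard_image]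
  let T : Set (ZMod n) := {i | f i ∈ X}
  let H : Set (ZMod n) := {i | f (i + 1) ∈ X}
  have hHT : H.encard = T.encard := by
    rw [← (Equiv.addRight (1 : ZMod n)).injective.encard_image H]
    congr 1
    ext i
    constructor
    · rintro ⟨j, hj, rfl⟩
      exact hj
    · intro hi
      exact ⟨i - 1, by simpa [H, T] using hi, by simp⟩
  have a1 : {i | f i ∉ X ∧ f (i + 1) ∈ X} = H \ T := by
    ext i; exact and_comm
  have a2 : {i | f i ∈ X ∧ f (i + 1) ∉ X} = T \ H := rfl
  rw [a1, a2]
  have b1 := Set.encard_sdiff_add_encard_inter H T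
  have b2 := Set.encard_sdiff_add_encard_inter T H
  rw [Set.inter_comm T H, ← hHT, ← b1] at b2
  exact (WithTop.add_right_cancel (Set.toFinite (H ∩ T)).encard_lt_top.ne b2).symm

lemma ENatBalanced.diff {V : Type*} {A C : Set (V × V)} (hA : ENatBalanced A)
    (hC : ENatBalanced C) (hCA : C ⊆ A) (hfin : C.Finite) : ENatBalanced (A \ C) := by
  intro X
  have e1 : inArcs (A \ C) X = inArcs A X \ inArcs C X := by
    ext e; simp only [inArcs, Set.mem_ofPred_eq, Set.mem_sdiff]; tauto
  have e2 : outArcs (A \ C) X = outArcs A X \ outArcs C X := by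
    ext e; simp only [outArcs, Set.mem_ofPred_eq, Set.mem_sdiff]; tauto
  have b1 := Set.encard_sdiff_add_encard_of_subset
    (show inArcs C X ⊆ inArcs A X from fun e he => ⟨hCA he.1, he.2⟩)
  have b2 := Set.encard_sdiff_add_encard_of_subset
    (show outArcs C X ⊆ outArcs A X from fun e he => ⟨hCA he.1, he.2⟩)
  rw [← hA X, ← b1, ← hC X] at b2
  rw [e1, e2]
  have hf : (inArcs C X).Finite := hfin.subset fun e he => he.1
  exact (WithTop.add_right_cancel hf.encard_lt_top.ne b2).symm

lemma IsDicycle.mono {V : Type*} {A B C : Set (V × V)} (h : IsDicycle B C) (hBA : B ⊆ A) :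
    IsDicycle A C := by
  obtain ⟨n, f, hn, hf, hC, hCB⟩ := h
  exact ⟨n, f, hn, hf, hC, hCB.trans hBA⟩

lemma IsDicycle.subset {V : Type*} {A C : Set (V × V)} (h : IsDicycle A C) : C ⊆ A := by
  obtain ⟨n, f, hn, hf, hC, hCB⟩ := h
  exact hCB

/-- One step of the greedy deletion: `C` is a dicycle through `a` when `a ∈ B`, and may be
empty when `a` has already been deleted. -/
lemma exists_step {V : Type*} {A : Set (V × V)} (hA : ∀ e ∈ A, e.1 ≠ e.2)
    (B : {B : Set (V × V) // B ⊆ A ∧ ENatBalanced B}) (a : V × V) :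
    ∃ C : Set (V × V), C ⊆ B.1 ∧ (C.Nonempty → IsDicycle A C) ∧ ENatBalanced (B.1 \ C) ∧
      (a ∈ B.1 → a ∈ C) := by
  by_cases ha : a ∈ B.1
  · obtain ⟨C, hC, haC⟩ := exists_dicycle (fun e he => hA e (B.2.1 he)) B.2.2 ha
    exact ⟨C, hC.subset, fun _ => hC.mono B.2.1,
      B.2.2.diff (IsDicycle.enatBalanced hC) hC.subset hC.finite, fun _ => haC⟩
  · exact ⟨∅, Set.empty_subset _, by simp, by simpa using B.2.2, fun h => absurd h ha⟩

/-- If the arc set of a loop-free balanced digraph is countable, then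
it can be partitioned into dicycles. -/
theorem countable_balanced_digraph_partition {V : Type*} (A : Set (V × V))
    (hA : ∀ e ∈ A, e.1 ≠ e.2) (hcount : A.Countable) (hbal : IsBalanced A) :
    ∃ P : Set (Set (V × V)), IsDicyclePartition A P := by
  rcases A.eq_empty_or_nonempty with rfl | hne
  · exact ⟨∅, by simp, by simp, by simp⟩
  obtain ⟨e, he⟩ := hcount.exists_eq_range hne
  choose cyc hsub hdi hba hmem using exists_step hA
  -- `S n` is what is left of `A` before step `n`; step `n` deletes `K n`.
  let S : ℕ → {B : Set (V × V) // B ⊆ A ∧ ENatBalanced B} := fun n =>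
    Nat.rec ⟨A, subset_rfl, hbal.enatBalanced⟩
      (fun n B => ⟨B.1 \ cyc B (e n), Set.sdiff_subset.trans B.2.1, hba B (e n)⟩) n
  let K : ℕ → Set (V × V) := fun n => cyc (S n) (e n)
  have hS : ∀ n, (S (n + 1)).1 = (S n).1 \ K n := fun n => rfl
  have hanti : Antitone fun n => (S n).1 :=
    antitone_nat_of_succ_le fun n => (hS n).le.trans Set.sdiff_subset
  have hdisj : ∀ m n, m < n → Disjoint (K m) (K n) := by
    intro m n hmn
    refine Set.disjoint_left.2 fun x hxm hxn => ?_
    have h1 : x ∈ (S (m + 1)).1 := hanti (Nat.succ_le_of_lt hmn) (hsub (S n) (e n) hxn)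
    rw [hS] at h1
    exact h1.2 hxm
  refine ⟨{C | C.Nonempty ∧ ∃ n, C = K n}, ?_, ?_, ?_⟩
  · rintro C ⟨hC, n, rfl⟩
    exact hdi _ _ hC
  · rintro C ⟨-, m, rfl⟩ D ⟨-, n, rfl⟩ hCD
    rcases lt_trichotomy m n with h | h | h
    · exact hdisj m n h
    · exact absurd (congrArg K h) hCD
    · exact (hdisj n m h).symm
  · apply Set.Subset.antisymm
    · rintro a ⟨C, ⟨-, n, rfl⟩, ha⟩
      exact (S n).2.1 (hsub _ _ ha)
    · intro a ha
      have hcov : ∀ n, a ∈ (S n).1 ∨ ∃ m, a ∈ K m := by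
        intro n
        induction n with
        | zero => exact Or.inl ha
        | succ n ih =>
          rcases ih with h | h
          · by_cases hK : a ∈ K n
            · exact Or.inr ⟨n, hK⟩
            · exact Or.inl (by rw [hS]; exact ⟨h, hK⟩)
          · exact Or.inr h
      obtain ⟨n, rfl⟩ : a ∈ Set.range e := he ▸ ha
      obtain ⟨m, hm⟩ : ∃ m, e n ∈ K m := by
        rcases hcov n with h | h
        · exact ⟨n, hmem _ _ h⟩
        · exact h
      exact ⟨K m, ⟨⟨_, hm⟩, m, rfl⟩, hm⟩
end

section
/- Let D = (V, A) be an unbalanced digraph. Then there exists a subset X ⊆ V which is overloaded in D (i.e., |out_D(X)| < |in_D(X)|) and such that the induced subdigraph D[X] is weakly connected. -/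
/-- Adjacency in the underlying undirected graph of the subdigraph of `A`
induced by the vertex set `S`. -/
def AdjOn {V : Type*} (A : Set (V × V)) (S : Set V) (u v : V) : Prop :=
  u ∈ S ∧ v ∈ S ∧ ((u, v) ∈ A ∨ (v, u) ∈ A)

/-- Reachability in the underlying undirected graph of the subdigraph of `A`
induced by the vertex set `S`. -/
def ReachOn {V : Type*} (A : Set (V × V)) (S : Set V) : V → V → Prop :=
  Relation.ReflTransGen (AdjOn A S)

/-- `Y` is the vertex set of a weakly connected component of the subdigraph of
`A` induced by the vertex set `S`. -/
def IsWeakComponent {V : Type*} (A : Set (V × V)) (S : Set V) (Y : Set V) : Prop :=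
  ∃ y ∈ S, Y = {v | ReachOn A S y v}

/-- The subdigraph of `A` induced by the vertex set `X` is weakly connected. -/
def IsWeaklyConnectedOn {V : Type*} (A : Set (V × V)) (X : Set V) : Prop :=
  X.Nonempty ∧ ∀ u ∈ X, ∀ v ∈ X, ReachOn A X u v

theorem AdjOn.symm' {V : Type*} {A : Set (V × V)} {S : Set V} {u v : V}
    (h : AdjOn A S u v) : AdjOn A S v u :=
  ⟨h.2.1, h.1, h.2.2.symm⟩

theorem ReachOn.symm' {V : Type*} {A : Set (V × V)} {S : Set V} {u v : V}
    (h : ReachOn A S u v) : ReachOn A S v u := by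
  induction h with
  | refl => exact Relation.ReflTransGen.refl
  | tail _ h2 ih => exact Relation.ReflTransGen.head h2.symm' ih

theorem ReachOn.mem {V : Type*} {A : Set (V × V)} {S : Set V} {u v : V}
    (hu : u ∈ S) (h : ReachOn A S u v) : v ∈ S := by
  induction h with
  | refl => exact hu
  | tail _ h2 _ => exact h2.2.1

theorem isWeaklyConnectedOn_component {V : Type*} (A : Set (V × V)) (S : Set V) (y : V) :
    IsWeaklyConnectedOn A {v | ReachOn A S y v} := by
  -- A path from `y` inside `S` visits only vertices of the component of `y`.
  have key : ∀ v, ReachOn A S y v → ReachOn A {v | ReachOn A S y v} y v := by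
    intro v h
    induction h with
    | refl => exact Relation.ReflTransGen.refl
    | tail h1 h2 ih =>
      exact Relation.ReflTransGen.tail ih ⟨h1, Relation.ReflTransGen.tail h1 h2, h2.2.2⟩
  exact ⟨⟨y, Relation.ReflTransGen.refl⟩, fun u hu v hv =>
    Relation.ReflTransGen.trans (ReachOn.symm' (key u hu)) (key v hv)⟩

theorem inArcs_compl {V : Type*} (A : Set (V × V)) (X : Set V) :
    inArcs A Xᶜ = outArcs A X := by
  ext e; simp [inArcs, outArcs]

theorem outArcs_compl {V : Type*} (A : Set (V × V)) (X : Set V) :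
    outArcs A Xᶜ = inArcs A X := by
  ext e; simp [inArcs, outArcs]

/-- A cardinal inequality between sets, witnessed by a total function on the ambient type; this
form avoids dependent types when injections for different components are compared. -/
theorem exists_mapsTo_injOn_of_mk_le {α : Type*} {s t : Set α}
    (h : Cardinal.mk s ≤ Cardinal.mk t) : ∃ f : α → α, Set.MapsTo f s t ∧ Set.InjOn f s := by
  classical
  obtain ⟨g⟩ := h
  refine ⟨fun a => if ha : a ∈ s then (g ⟨a, ha⟩ : α) else a, ?_, ?_⟩
  · intro a ha
    simp only [ha, dite_true]
    exact (g ⟨a, ha⟩).2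
  · intro a ha b hb hab
    simp only [ha, hb, dite_true] at hab
    exact congrArg Subtype.val (g.injective (Subtype.ext hab))

/-- If no weakly connected set is overloaded, then no set is: the injections for the weak
components of `D[X]` are glued to an injection for `X`. -/
theorem mk_inArcs_le_of_weaklyConnected {V : Type*} (A : Set (V × V))
    (h : ∀ Y : Set V, IsWeaklyConnectedOn A Y →
      Cardinal.mk (inArcs A Y) ≤ Cardinal.mk (outArcs A Y)) (X : Set V) :
    Cardinal.mk (inArcs A X) ≤ Cardinal.mk (outArcs A X) := by
  let C : V → Set V := fun y => {v | ReachOn A X y v}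
  have hf : ∀ Y : Set V, ∃ f : V × V → V × V, IsWeaklyConnectedOn A Y →
      Set.MapsTo f (inArcs A Y) (outArcs A Y) ∧ Set.InjOn f (inArcs A Y) := by
    intro Y
    by_cases hY : IsWeaklyConnectedOn A Y
    · obtain ⟨f, hf⟩ := exists_mapsTo_injOn_of_mk_le (h Y hY)
      exact ⟨f, fun _ => hf⟩
    · exact ⟨id, fun h' => absurd h' hY⟩
  choose F hF using hf
  have hC : ∀ y, IsWeaklyConnectedOn A (C y) := isWeaklyConnectedOn_component A X
  have hin : ∀ e ∈ inArcs A X, e ∈ inArcs A (C e.2) := fun e he =>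
    ⟨he.1, fun h1 => he.2.1 (ReachOn.mem he.2.2 h1), Relation.ReflTransGen.refl⟩
  have hout : ∀ e ∈ inArcs A X, F (C e.2) e ∈ outArcs A (C e.2) := fun e he =>
    (hF _ (hC _)).1 (hin e he)
  refine Cardinal.mk_le_of_injective
    (f := fun e : inArcs A X => (⟨F (C e.1.2) e.1, ?_⟩ : outArcs A X)) ?_
  · obtain ⟨h1, h2, h3⟩ := hout e.1 e.2
    have h4 := ReachOn.mem e.2.2.2 h2
    -- If the head were in `X`, the arc would stay inside the component of its tail.
    exact ⟨h1, h4, fun h5 => h3 (Relation.ReflTransGen.tail h2 ⟨h4, h5, Or.inl h1⟩)⟩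
  · rintro ⟨e, he⟩ ⟨e', he'⟩ hee
    have hee : F (C e.2) e = F (C e'.2) e' := congrArg Subtype.val hee
    -- The common image has its tail in both components, which therefore coincide.
    have h1 : ReachOn A X e.2 (F (C e.2) e).1 := (hout e he).2.1
    have h2 : ReachOn A X e'.2 (F (C e.2) e).1 := hee ▸ (hout e' he').2.1
    have h3 : ReachOn A X e.2 e'.2 := Relation.ReflTransGen.trans h1 h2.symm'
    have hCC : C e.2 = C e'.2 := by
      ext v
      exact ⟨fun hv => Relation.ReflTransGen.trans h3.symm' hv,
        fun hv => Relation.ReflTransGen.trans h3 hv⟩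
    have h4 := hin e he
    rw [hCC] at hee h4
    exact Subtype.ext ((hF _ (hC _)).2 h4 (hin e' he') hee)

/-- In an unbalanced loop-free digraph there is an overloaded vertex set whose
induced subdigraph is weakly connected. -/
theorem exists_weakly_connected_overloaded_set {V : Type*}
    (A : Set (V × V)) (hA : ∀ e ∈ A, e.1 ≠ e.2) (hub : ¬ IsBalanced A) :
    ∃ X : Set V, IsWeaklyConnectedOn A X ∧
      Cardinal.mk (outArcs A X) < Cardinal.mk (inArcs A X) := by
  by_contra hcon
  push Not at hcon
  have hle := mk_inArcs_le_of_weaklyConnected A hcon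
  refine hub fun X => le_antisymm (hle X) ?_
  have hc := hle Xᶜ
  rwa [inArcs_compl, outArcs_compl] at hc
end
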